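/- Let m ≥ 2, δ ≥ 2, n = m·δ, and for s ∈ {0,1,…,n−1} let Λ_s ∈ GL_n(𝔽₂) be the permutation matrix of the bit rotation π_s, i.e. the i-th row of Λ_s is the standard basis row vector 𝐞_{π_s(i)}, where π_s(i) = ((i + s − 1) mod n) + 1 for 1 ≤ i ≤ n. Then Λ_s changes the type of every subset D ⊆ V in standard form of non-trivial type (i.e. for every such D the type of DΛ_s differs from the type of D) if and only if m ≤ s ≤ m(δ−1). -/

import Mathlib

open Matrix

/-- The index in `Fin (m * δ)` of the `i`-th coordinate of the `j`-th brick. -/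
def brickIdx (m δ : ℕ) (j : Fin δ) (i : Fin m) : Fin (m * δ) :=
  ⟨m * j.val + i.val, by
    have h1 : m * j.val + i.val < m * (j.val + 1) := by
      rw [Nat.mul_succ]
      exact Nat.add_lt_add_left i.isLt _
    exact lt_of_lt_of_le h1 (Nat.mul_le_mul le_rfl j.isLt)⟩

/-- The projection of a vector on its `j`-th brick. -/
def brickProj (m δ : ℕ) (v : Fin (m * δ) → ZMod 2) (j : Fin δ) : Fin m → ZMod 2 :=
  fun i => v (brickIdx m δ j i)

/-- The `j`-th box of a subset `D`: the projection of `D` on the `j`-th brick. -/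
def box (m δ : ℕ) (D : Set (Fin (m * δ) → ZMod 2)) (j : Fin δ) : Set (Fin m → ZMod 2) :=
  (fun v => brickProj m δ v j) '' D

/-- A box is white if it is a singleton. -/
def IsWhite {α : Type*} (S : Set α) : Prop := ∃ a, S = {a}

/-- A box is black if it is everything. -/
def IsBlack {α : Type*} (S : Set α) : Prop := S = Set.univ

/-- A box is ruled if it is neither white nor black. -/
def IsRuled {α : Type*} (S : Set α) : Prop := ¬ IsWhite S ∧ ¬ IsBlack S

/-- The set `{v_w} × R × 𝔽₂^{m·n_b}` in standard form: the first `nw` bricks are fixed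
(equal to `w`), the brick number `nw` (0-indexed) lies in `R` when `nr = 1`, and the
remaining bricks are free. -/
def StdSet (m δ nw nr : ℕ) (w : Fin δ → Fin m → ZMod 2) (R : Set (Fin m → ZMod 2)) :
    Set (Fin (m * δ) → ZMod 2) :=
  { v | (∀ j : Fin δ, (j : ℕ) < nw → brickProj m δ v j = w j) ∧
        (nr = 1 → ∀ j : Fin δ, (j : ℕ) = nw → brickProj m δ v j ∈ R) }

/-- `D` is in standard form of type `(nw, nr, nb)`. -/
def StdForm (m δ : ℕ) (D : Set (Fin (m * δ) → ZMod 2)) (nw nr nb : ℕ) : Prop :=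
  nw + nr + nb = δ ∧ nr ≤ 1 ∧
  ∃ (w : Fin δ → Fin m → ZMod 2) (R : Set (Fin m → ZMod 2)),
    (nr = 1 → 2 ≤ R.ncard ∧ R.ncard ≤ 2 ^ m - 1) ∧ D = StdSet m δ nw nr w R

/-- `D` has type `(nw, nr, nb)`: its first `nw` boxes are white, the next `nr` boxes are
ruled, and its last `nb` boxes are black. -/
def HasType (m δ : ℕ) (D : Set (Fin (m * δ) → ZMod 2)) (nw nr nb : ℕ) : Prop :=
  nw + nr + nb = δ ∧ nr ≤ 1 ∧
  ∀ j : Fin δ,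
    ((j : ℕ) < nw → IsWhite (box m δ D j)) ∧
    (nw ≤ (j : ℕ) → (j : ℕ) < nw + nr → IsRuled (box m δ D j)) ∧
    (nw + nr ≤ (j : ℕ) → IsBlack (box m δ D j))

/-- `D` and `E` have the same type: corresponding boxes have the same kind. -/
def SameType (m δ : ℕ) (D E : Set (Fin (m * δ) → ZMod 2)) : Prop :=
  ∀ j : Fin δ,
    (IsWhite (box m δ D j) ↔ IsWhite (box m δ E j)) ∧
    (IsBlack (box m δ D j) ↔ IsBlack (box m δ E j))

lemma m_le_mul (m d : ℕ) (h : 1 ≤ d) : m ≤ m * d := by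
  calc m = m * 1 := (Nat.mul_one m).symm
  _ ≤ m * d := Nat.mul_le_mul le_rfl h

lemma shift_lt (m δ a : ℕ) (ha : a ≤ δ) (k : ℕ) (hk : k < m * (δ - a)) :
    m * a + k < m * δ := by
  have h := Nat.add_lt_add_left hk (m * a)
  rwa [← Nat.mul_add, Nat.add_sub_cancel' ha] at h

/-- The index in `Fin (m * δ)` obtained by skipping the first `a` bricks. -/
def shiftIdx (m δ a : ℕ) (ha : a ≤ δ) (k : Fin (m * (δ - a))) : Fin (m * δ) :=
  ⟨m * a + k.val, shift_lt m δ a ha k.val k.isLt⟩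

/-- The submatrix `Λ_{(a+1,b+1):(δ,δ)}` (blocks with row brick ≥ a and column brick ≥ b). -/
def subBlock (m δ : ℕ) (Λ : Matrix (Fin (m * δ)) (Fin (m * δ)) (ZMod 2))
    (a b : ℕ) (ha : a ≤ δ) (hb : b ≤ δ) :
    Matrix (Fin (m * (δ - a))) (Fin (m * (δ - b))) (ZMod 2) :=
  Matrix.of fun r c => Λ (shiftIdx m δ a ha r) (shiftIdx m δ b hb c)

/-- The column of blocks `Λ_{(a+1,j+1):(δ,j+1)}` (row bricks ≥ a, column brick j). -/
def subColBlock (m δ : ℕ) (Λ : Matrix (Fin (m * δ)) (Fin (m * δ)) (ZMod 2))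
    (a : ℕ) (ha : a ≤ δ) (j : Fin δ) :
    Matrix (Fin (m * (δ - a))) (Fin m) (ZMod 2) :=
  Matrix.of fun r c => Λ (shiftIdx m δ a ha r) (brickIdx m δ j c)

/-- The row of blocks `Λ_{(j+1,1):(j+1,c2)}` (row brick j, column bricks < c2). -/
def rowBlock (m δ : ℕ) (Λ : Matrix (Fin (m * δ)) (Fin (m * δ)) (ZMod 2))
    (j : Fin δ) (c2 : ℕ) (hc : c2 ≤ δ) :
    Matrix (Fin m) (Fin (m * c2)) (ZMod 2) :=
  Matrix.of fun i c => Λ (brickIdx m δ j i) (Fin.castLE (Nat.mul_le_mul le_rfl hc) c)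

/-- The block `Λ_{j+1, j'+1}`. -/
def block (m δ : ℕ) (Λ : Matrix (Fin (m * δ)) (Fin (m * δ)) (ZMod 2)) (j j' : Fin δ) :
    Matrix (Fin m) (Fin m) (ZMod 2) :=
  Matrix.of fun i i' => Λ (brickIdx m δ j i) (brickIdx m δ j' i')

/-- The set `R × 𝔽₂^{m (d-1)}` of vectors of `d` bricks whose first brick lies in `R`. -/
def rulDomain (m d : ℕ) (hd : 1 ≤ d) (R : Set (Fin m → ZMod 2)) :
    Set (Fin (m * d) → ZMod 2) :=
  { u | (fun i : Fin m => u (Fin.castLE (m_le_mul m d hd) i)) ∈ R }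

/-- The permutation matrix of the bit rotation `i ↦ (i + s) mod n` (0-indexed); its `i`-th
row is the standard basis row vector with `1` in position `(i + s) mod n`. -/
def rotMatrix (n s : ℕ) : Matrix (Fin n) (Fin n) (ZMod 2) :=
  Matrix.of fun i j => if (j : ℕ) = ((i : ℕ) + s) % n then 1 else 0

/-!
Multiplication by `Λ_s` relabels the coordinates: the image of `D` is the preimage of `D` under
`u ↦ u ∘ σ`, where `σ p = p + s` modulo `n`.

If `σ` sends a coordinate `p` of the first brick to the first brick again, then `{v | v p = 0}` and
its image `{v | v (σ p) = 0}` are both in standard form of type `(0, 1, δ - 1)`. Such a `p` exists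
exactly when `s < m` or `m (δ - 1) < s`.

Otherwise, suppose that the type `(nw, nr, nb)` of `D` is preserved. If `nw = 0`, the first brick of
the image is filled with free coordinates of `D`, so the first box turns from ruled to black. If
`nw > 0`, no coordinate on which `D` is non-constant may be sent into the first `nw` bricks. But `D`
is non-constant on some coordinate of the brick `nw` and on all coordinates beyond that brick, and
the rotation sends one of these into the first `nw` bricks.
-/

section Bricks

variable {m δ : ℕ}

/-- The identification of pairs (brick, position in the brick) with coordinates, given by
`brickIdx`. -/
def brickEquiv (m δ : ℕ) : Fin δ × Fin m ≃ Fin (m * δ) :=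
  finProdFinEquiv.trans (finCongr (Nat.mul_comm δ m))

lemma brickEquiv_apply (j : Fin δ) (i : Fin m) : brickEquiv m δ (j, i) = brickIdx m δ j i :=
  Fin.ext (Nat.add_comm _ _)

lemma exists_brickIdx_eq (p : Fin (m * δ)) : ∃ j i, brickIdx m δ j i = p := by
  obtain ⟨⟨j, i⟩, rfl⟩ := (brickEquiv m δ).surjective p
  exact ⟨j, i, (brickEquiv_apply j i).symm⟩

lemma brickIdx_lt_iff {j : Fin δ} {i : Fin m} {k : ℕ} :
    (brickIdx m δ j i : ℕ) < m * k ↔ (j : ℕ) < k := by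
  refine ⟨fun h ↦ Nat.lt_of_mul_lt_mul_left (lt_of_le_of_lt (Nat.le_add_right _ _) h), fun h ↦ ?_⟩
  calc m * (j : ℕ) + i < m * ((j : ℕ) + 1) := by rw [Nat.mul_succ]; lia
    _ ≤ m * k := Nat.mul_le_mul_left m h

/-- The vector with the given bricks: the inverse of `brickProj`. -/
def ofBricks (f : Fin δ → Fin m → ZMod 2) : Fin (m * δ) → ZMod 2 :=
  Function.uncurry f ∘ (brickEquiv m δ).symm

lemma ofBricks_brickIdx (f : Fin δ → Fin m → ZMod 2) (j : Fin δ) (i : Fin m) :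
    ofBricks f (brickIdx m δ j i) = f j i := by
  simp [ofBricks, ← brickEquiv_apply]

lemma brickProj_ofBricks (f : Fin δ → Fin m → ZMod 2) (j : Fin δ) :
    brickProj m δ (ofBricks f) j = f j :=
  funext (ofBricks_brickIdx f j)

end Bricks

section Types

variable {m δ nw nr nb : ℕ} {D E : Set (Fin (m * δ) → ZMod 2)}

lemma isRuled_of_ncard {α : Type*} {S : Set α} (h₁ : 1 < S.ncard)
    (h₂ : S.ncard < Nat.card α) : IsRuled S := by
  constructor
  · rintro ⟨a, rfl⟩
    simp at h₁
  · rintro rfl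
    simp at h₂

lemma IsWhite.isBlack_iff {α : Type*} {S : Set α} (hS : IsWhite S) :
    IsBlack S ↔ Subsingleton α := by
  obtain ⟨a, rfl⟩ := hS
  refine ⟨fun h ↦ Set.subsingleton_univ_iff.1 (h ▸ Set.subsingleton_singleton), fun _ ↦ ?_⟩
  exact Set.eq_univ_of_forall fun b ↦ Subsingleton.elim b a

lemma HasType.sameType (hD : HasType m δ D nw nr nb) (hE : HasType m δ E nw nr nb) :
    SameType m δ D E := by
  intro j
  obtain ⟨hDw, hDr, hDb⟩ := hD.2.2 j
  obtain ⟨hEw, hEr, hEb⟩ := hE.2.2 j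
  rcases lt_or_ge (j : ℕ) nw with hw | hw
  · exact ⟨iff_of_true (hDw hw) (hEw hw), (hDw hw).isBlack_iff.trans (hEw hw).isBlack_iff.symm⟩
  rcases lt_or_ge (j : ℕ) (nw + nr) with hr | hr
  · exact ⟨iff_of_false (hDr hw hr).1 (hEr hw hr).1, iff_of_false (hDr hw hr).2 (hEr hw hr).2⟩
  · rw [(hDb hr : box m δ D j = _), (hEb hr : box m δ E j = _)]
    exact ⟨Iff.rfl, Iff.rfl⟩

lemma SameType.hasType (h : SameType m δ D E) (hD : HasType m δ D nw nr nb) :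
    HasType m δ E nw nr nb := by
  refine ⟨hD.1, hD.2.1, fun j ↦ ?_⟩
  obtain ⟨hw, hr, hb⟩ := hD.2.2 j
  exact ⟨fun hj ↦ (h j).1.1 (hw hj),
    fun hj hj' ↦ ⟨mt (h j).1.2 (hr hj hj').1, mt (h j).2.2 (hr hj hj').2⟩,
    fun hj ↦ (h j).2.1 (hb hj)⟩

end Types

section StandardForm

variable {m δ nw nr nb : ℕ} {D : Set (Fin (m * δ) → ZMod 2)}

lemma isBlack_box_of_dependsOn {P : Set (Fin (m * δ))} (hD : D.Nonempty)
    (hP : DependsOn (· ∈ D) P) {j : Fin δ} (hj : ∀ i, brickIdx m δ j i ∉ P) :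
    IsBlack (box m δ D j) := by
  obtain ⟨v, hv⟩ := hD
  refine Set.eq_univ_of_forall fun t ↦ ?_
  have huv : ∀ p ∈ P, ofBricks (Function.update (brickProj m δ v) j t) p = v p := by
    intro p hp
    obtain ⟨k, i, rfl⟩ := exists_brickIdx_eq p
    have hkj : k ≠ j := fun h ↦ hj i (h ▸ hp)
    rw [ofBricks_brickIdx, Function.update_of_ne hkj, brickProj]
  exact ⟨_, (hP huv).mpr hv, (brickProj_ofBricks _ j).trans (Function.update_self ..)⟩

lemma dependsOn_mem_preimage_comp {ι α : Type*} {D : Set (ι → α)} {P : Set ι}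
    (hP : DependsOn (· ∈ D) P) (σ : Equiv.Perm ι) :
    DependsOn (· ∈ (· ∘ σ) ⁻¹' D) (σ '' P) :=
  fun _ _ huv ↦ hP fun _ hp ↦ huv _ (Set.mem_image_of_mem σ hp)

lemma dependsOn_mem_stdSet (w : Fin δ → Fin m → ZMod 2) (R : Set (Fin m → ZMod 2)) :
    DependsOn (· ∈ StdSet m δ nw nr w R) {p | (p : ℕ) < m * (nw + nr)} := by
  intro u v huv
  have hbrick : ∀ j : Fin δ, (j : ℕ) < nw + nr → brickProj m δ u j = brickProj m δ v j :=
    fun j hj ↦ funext fun i ↦ huv _ (brickIdx_lt_iff.2 hj)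
  refine propext (and_congr (forall₂_congr fun j hj ↦ ?_)
    (forall_congr' fun hnr ↦ forall₂_congr fun j hj ↦ ?_))
  · rw [hbrick j (by lia)]
  · rw [hbrick j (by lia)]

lemma exists_mem_stdSet_brickProj_eq (w : Fin δ → Fin m → ZMod 2) {R : Set (Fin m → ZMod 2)}
    {r : Fin m → ZMod 2} (hr : nr = 1 → r ∈ R) :
    ∃ v ∈ StdSet m δ nw nr w R, ∀ j : Fin δ, nw ≤ j → brickProj m δ v j = r := by
  refine ⟨ofBricks fun j ↦ if (j : ℕ) < nw then w j else r, ⟨fun j hj ↦ ?_, fun hnr j hj ↦ ?_⟩,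
    fun j hj ↦ ?_⟩
  · rw [brickProj_ofBricks, if_pos hj]
  · rw [brickProj_ofBricks, if_neg hj.not_lt]
    exact hr hnr
  · rw [brickProj_ofBricks, if_neg hj.not_gt]

lemma stdSet_nonempty (w : Fin δ → Fin m → ZMod 2) {R : Set (Fin m → ZMod 2)}
    (hR : nr = 1 → R.Nonempty) : (StdSet m δ nw nr w R).Nonempty := by
  obtain ⟨r, hr⟩ : ∃ r, nr = 1 → r ∈ R := by
    by_cases hnr : nr = 1
    · exact (hR hnr).imp fun r hr _ ↦ hr
    · exact ⟨0, fun h ↦ absurd h hnr⟩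
  obtain ⟨v, hv, -⟩ := exists_mem_stdSet_brickProj_eq (nw := nw) w hr
  exact ⟨v, hv⟩

lemma StdForm.nonempty (hD : StdForm m δ D nw nr nb) : D.Nonempty := by
  obtain ⟨-, -, w, R, hR, rfl⟩ := hD
  exact stdSet_nonempty w fun hnr ↦ Set.nonempty_of_ncard_ne_zero (by have := (hR hnr).1; lia)

lemma StdForm.dependsOn (hD : StdForm m δ D nw nr nb) :
    DependsOn (· ∈ D) {p | (p : ℕ) < m * (nw + nr)} := by
  obtain ⟨-, -, w, R, -, rfl⟩ := hD
  exact dependsOn_mem_stdSet w R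

lemma isWhite_box_stdSet {w : Fin δ → Fin m → ZMod 2} {R : Set (Fin m → ZMod 2)}
    (hne : (StdSet m δ nw nr w R).Nonempty) {j : Fin δ} (hj : (j : ℕ) < nw) :
    IsWhite (box m δ (StdSet m δ nw nr w R) j) :=
  ⟨w j, (hne.image _).subset_singleton_iff.1 (Set.image_subset_iff.2 fun _ hv ↦ hv.1 j hj)⟩

lemma box_stdSet_eq {w : Fin δ → Fin m → ZMod 2} {R : Set (Fin m → ZMod 2)} {j : Fin δ}
    (hj : (j : ℕ) = nw) : box m δ (StdSet m δ nw 1 w R) j = R := by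
  refine (Set.image_subset_iff.2 fun v hv ↦ hv.2 rfl j hj).antisymm fun r hr ↦ ?_
  obtain ⟨v, hv, hvr⟩ := exists_mem_stdSet_brickProj_eq (nw := nw) (nr := 1) w fun _ ↦ hr
  exact ⟨v, hv, hvr j hj.ge⟩

lemma StdForm.hasType (hD : StdForm m δ D nw nr nb) : HasType m δ D nw nr nb := by
  refine ⟨hD.1, hD.2.1, fun j ↦ ⟨fun hw ↦ ?_, fun hw hr ↦ ?_, fun hb ↦ ?_⟩⟩
  · have hne := hD.nonempty
    obtain ⟨-, -, w, R, -, rfl⟩ := hD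
    exact isWhite_box_stdSet hne hw
  · obtain ⟨-, hnr, w, R, hR, rfl⟩ := hD
    obtain rfl : nr = 1 := by lia
    rw [box_stdSet_eq (by lia)]
    have hcard : Nat.card (Fin m → ZMod 2) = 2 ^ m := by simp
    have hpos : 0 < 2 ^ m := by positivity
    exact isRuled_of_ncard (hR rfl).1 (by have := (hR rfl).2; lia)
  · exact isBlack_box_of_dependsOn hD.nonempty hD.dependsOn fun i ↦ brickIdx_lt_iff.not.2 hb.not_gt

end StandardForm

section CoordHyperplane

/-- The hyperplane of vectors whose coordinate `i` vanishes. -/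
def coordHyperplane {ι : Type*} (i : ι) : Set (ι → ZMod 2) :=
  {v | v i = 0}

lemma preimage_comp_coordHyperplane {ι : Type*} (σ : Equiv.Perm ι) (i : ι) :
    (· ∘ σ) ⁻¹' coordHyperplane i = coordHyperplane (σ i) :=
  rfl

lemma one_lt_ncard_coordHyperplane {ι : Type*} [Finite ι] [Nontrivial ι] (i : ι) :
    1 < (coordHyperplane i).ncard := by
  classical
  obtain ⟨k, hk⟩ := exists_ne i
  refine (Set.one_lt_ncard_iff (Set.toFinite _)).2
    ⟨0, Pi.single k 1, rfl, Pi.single_eq_of_ne' hk 1, fun h ↦ ?_⟩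
  simpa using congrFun h k

lemma ncard_coordHyperplane_lt {ι : Type*} [Finite ι] (i : ι) :
    (coordHyperplane i).ncard < Nat.card (ι → ZMod 2) := by
  refine Set.ncard_lt_card fun h ↦ ?_
  exact one_ne_zero (h ▸ Set.mem_univ (1 : ι → ZMod 2) : (1 : ι → ZMod 2) ∈ coordHyperplane i)

lemma stdForm_coordHyperplane {m δ : ℕ} (hm : 2 ≤ m) {p : Fin (m * δ)} (hp : (p : ℕ) < m) :
    StdForm m δ (coordHyperplane p) 0 1 (δ - 1) := by
  obtain ⟨j, i, rfl⟩ := exists_brickIdx_eq p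
  have hj : (j : ℕ) = 0 := Nat.lt_one_iff.1 (brickIdx_lt_iff.1 (by rwa [Nat.mul_one]))
  have : Nontrivial (Fin m) := Fin.nontrivial_iff_two_le.2 hm
  refine ⟨by lia, le_rfl, 0, coordHyperplane i, fun _ ↦ ⟨one_lt_ncard_coordHyperplane i, ?_⟩, ?_⟩
  · have hlt := ncard_coordHyperplane_lt i
    have hcard : Nat.card (Fin m → ZMod 2) = 2 ^ m := by simp
    lia
  · ext v
    refine ⟨fun hv ↦ ⟨fun k hk ↦ absurd hk (Nat.not_lt_zero _), fun _ k hk ↦ ?_⟩,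
      fun hv ↦ hv.2 rfl j hj⟩
    obtain rfl : k = j := Fin.ext (hk.trans hj.symm)
    exact hv

end CoordHyperplane

section VariesAt

/-- `D` is not constant on the coordinate `i`. -/
def VariesAt {ι α : Type*} (D : Set (ι → α)) (i : ι) : Prop :=
  ∃ u ∈ D, ∃ v ∈ D, u i ≠ v i

lemma VariesAt.preimage_comp {ι α : Type*} {D : Set (ι → α)} {i : ι} (h : VariesAt D i)
    (σ : Equiv.Perm ι) : VariesAt ((· ∘ σ) ⁻¹' D) (σ i) := by
  obtain ⟨u, hu, v, hv, huv⟩ := h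
  exact ⟨u ∘ σ.symm, by simpa [Function.comp_assoc] using hu,
    v ∘ σ.symm, by simpa [Function.comp_assoc] using hv, by simpa using huv⟩

variable {m δ nw nr nb : ℕ} {D : Set (Fin (m * δ) → ZMod 2)}

lemma isWhite_box_iff (hD : D.Nonempty) {j : Fin δ} :
    IsWhite (box m δ D j) ↔ ∀ i, ¬ VariesAt D (brickIdx m δ j i) := by
  have hbox : (box m δ D j).Nonempty := hD.image _
  rw [IsWhite, Set.exists_eq_singleton_iff_nonempty_subsingleton, and_iff_right hbox]
  constructor
  · rintro hsub i ⟨u, hu, v, hv, huv⟩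
    exact huv (congrFun (hsub ⟨u, hu, rfl⟩ ⟨v, hv, rfl⟩) i)
  · rintro hconst _ ⟨u, hu, rfl⟩ _ ⟨v, hv, rfl⟩
    exact funext fun i ↦ by_contra fun huv ↦ hconst i ⟨u, hu, v, hv, huv⟩

lemma HasType.le_of_variesAt (hD : HasType m δ D nw nr nb) {p : Fin (m * δ)}
    (hp : VariesAt D p) : m * nw ≤ p := by
  obtain ⟨j, i, rfl⟩ := exists_brickIdx_eq p
  have hne : D.Nonempty := hp.imp fun _ hu ↦ hu.1
  exact not_lt.1 fun hlt ↦
    (isWhite_box_iff hne).1 ((hD.2.2 j).1 (brickIdx_lt_iff.1 hlt)) i hp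

lemma HasType.variesAt_of_le (hD : HasType m δ D nw nr nb) {p : Fin (m * δ)}
    (hp : m * (nw + nr) ≤ p) : VariesAt D p := by
  obtain ⟨j, i, rfl⟩ := exists_brickIdx_eq p
  have hblack : box m δ D j = Set.univ :=
    (hD.2.2 j).2.2 (not_lt.1 (brickIdx_lt_iff.not.1 hp.not_gt))
  obtain ⟨u, hu, hu0⟩ : (0 : Fin m → ZMod 2) ∈ box m δ D j := hblack ▸ Set.mem_univ _
  obtain ⟨v, hv, hv1⟩ : (1 : Fin m → ZMod 2) ∈ box m δ D j := hblack ▸ Set.mem_univ _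
  refine ⟨u, hu, v, hv, fun huv ↦ zero_ne_one (α := ZMod 2) ?_⟩
  exact (congrFun hu0 i).symm.trans (huv.trans (congrFun hv1 i))

lemma HasType.exists_variesAt [NeZero m] (hD : HasType m δ D nw nr nb) (hne : D.Nonempty)
    (hnw : nw < δ) : ∃ p : Fin (m * δ), m * nw ≤ p ∧ (p : ℕ) < m * (nw + 1) ∧ VariesAt D p := by
  have hwhite : ¬ IsWhite (box m δ D ⟨nw, hnw⟩) := by
    intro hwhite
    obtain ⟨-, hr, hb⟩ := hD.2.2 ⟨nw, hnw⟩
    rcases Nat.eq_zero_or_pos nr with rfl | hnr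
    · exact not_subsingleton _ (hwhite.isBlack_iff.1 (hb le_rfl))
    · exact (hr le_rfl (Nat.lt_add_of_pos_right hnr)).1 hwhite
  obtain ⟨i, hi⟩ : ∃ i, VariesAt D (brickIdx m δ ⟨nw, hnw⟩ i) := by
    simpa only [isWhite_box_iff hne, not_forall, not_not] using hwhite
  exact ⟨_, Nat.le_add_right _ _, brickIdx_lt_iff.2 (Nat.lt_succ_self nw), hi⟩

end VariesAt

section Rotation

lemma image_vecMul_permMatrix {ι R : Type*} [Fintype ι] [DecidableEq ι] [CommRing R]
    (σ : Equiv.Perm ι) (D : Set (ι → R)) :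
    (fun v ↦ v ᵥ* σ.permMatrix R) '' D = (· ∘ σ) ⁻¹' D := by
  simp only [vecMul_permMatrix]
  exact (σ.arrowCongr (Equiv.refl R)).image_eq_preimage_symm D

lemma rotMatrix_eq_permMatrix {n : ℕ} (s : Fin n) :
    rotMatrix n s = (finCycle s).permMatrix (ZMod 2) := by
  ext i j
  simp [rotMatrix, Equiv.Perm.permMatrix, PEquiv.toMatrix_apply, Fin.ext_iff, Fin.val_add, eq_comm]

lemma val_finCycle {n : ℕ} (s p : Fin n) : (finCycle s p : ℕ) = (p + s) % n :=
  Fin.val_add p s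

lemma val_finCycle_of_lt {n : ℕ} {s p : Fin n} (h : (p + s : ℕ) < n) :
    (finCycle s p : ℕ) = p + s := by
  rw [val_finCycle, Nat.mod_eq_of_lt h]

lemma val_finCycle_of_le {n : ℕ} {s p : Fin n} (h : n ≤ (p + s : ℕ)) :
    (finCycle s p : ℕ) = p + s - n := by
  rw [val_finCycle, Nat.mod_eq_sub_mod h, Nat.mod_eq_of_lt (by lia)]

lemma exists_lt_finCycle_lt_iff {n m : ℕ} (hm : 0 < m) (hmn : m ≤ n) (s : Fin n) :
    (∃ p : Fin n, (p : ℕ) < m ∧ (finCycle s p : ℕ) < m) ↔ (s : ℕ) < m ∨ n < s + m := by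
  constructor
  · rintro ⟨p, hp, hsp⟩
    rcases lt_or_ge (p + s : ℕ) n with h | h
    · rw [val_finCycle_of_lt h] at hsp
      lia
    · lia
  · rintro (hs | hs)
    · refine ⟨⟨0, by lia⟩, hm, ?_⟩
      rw [val_finCycle_of_lt] <;> dsimp only <;> lia
    · refine ⟨⟨m - 1, by lia⟩, Nat.sub_one_lt hm.ne', ?_⟩
      rw [val_finCycle_of_le] <;> dsimp only <;> lia

lemma exists_finCycle_lt {n m a : ℕ} {s p : Fin n} (hms : m ≤ s) (hsm : s + m ≤ n) (hma : m ≤ a)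
    (hap : a ≤ p) (hpa : (p : ℕ) < a + m) :
    (finCycle s p : ℕ) < a ∨ ∃ q : Fin n, a + m ≤ q ∧ (finCycle s q : ℕ) < a := by
  rcases lt_or_ge (p + s : ℕ) n with h | h
  · -- The first coordinate from `a + m` on that wraps around.
    refine .inr ⟨⟨max (n - s) (a + m), by lia⟩, le_max_right _ _, ?_⟩
    rw [val_finCycle_of_le] <;> dsimp only <;> lia
  · rw [val_finCycle_of_le h]
    lia

variable {m δ nw nr nb : ℕ} {D : Set (Fin (m * δ) → ZMod 2)} {s : Fin (m * δ)}

lemma sameType_preimage_comp_coordHyperplane (hm : 2 ≤ m) {p : Fin (m * δ)} (hp : (p : ℕ) < m)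
    {σ : Equiv.Perm (Fin (m * δ))} (hσp : (σ p : ℕ) < m) :
    SameType m δ (coordHyperplane p) ((· ∘ σ) ⁻¹' coordHyperplane p) := by
  rw [preimage_comp_coordHyperplane]
  exact (stdForm_coordHyperplane hm hp).hasType.sameType (stdForm_coordHyperplane hm hσp).hasType

lemma HasType.not_sameType_finCycle (hD : HasType m δ D nw nr nb) (hne : D.Nonempty)
    (hpos : 0 < nw) (hnw : nw < δ) (hms : m ≤ s) (hsm : s + m ≤ m * δ) :
    ¬ SameType m δ D ((· ∘ finCycle s) ⁻¹' D) := by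
  intro hsame
  have : NeZero m := .of_pos (Nat.pos_of_mul_pos_right s.pos)
  have hstay : ∀ p, VariesAt D p → m * nw ≤ finCycle s p := fun p hp ↦
    (hsame.hasType hD).le_of_variesAt (hp.preimage_comp _)
  obtain ⟨p, hp, hp', hvar⟩ := hD.exists_variesAt hne hnw
  have hma : m ≤ m * nw := Nat.le_mul_of_pos_right m hpos
  rcases exists_finCycle_lt hms hsm hma hp (Nat.mul_succ m nw ▸ hp') with h | ⟨q, hq, h⟩
  · exact h.not_ge (hstay p hvar)
  · have hfree : m * (nw + nr) ≤ q := by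
      calc m * (nw + nr) ≤ m * (nw + 1) := Nat.mul_le_mul_left m (Nat.add_le_add_left hD.2.1 nw)
        _ ≤ q := hq
    exact h.not_ge (hstay q (hD.variesAt_of_le hfree))

lemma StdForm.not_sameType_finCycle_of_ruled (hD : StdForm m δ D 0 1 nb) (hms : m ≤ s)
    (hsm : s + m ≤ m * δ) : ¬ SameType m δ D ((· ∘ finCycle s) ⁻¹' D) := by
  intro hsame
  have hδ : 0 < δ := by have := hD.1; lia
  have hruled : IsRuled (box m δ ((· ∘ finCycle s) ⁻¹' D) ⟨0, hδ⟩) :=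
    ((hsame.hasType hD.hasType).2.2 _).2.1 le_rfl Nat.zero_lt_one
  have hne : ((· ∘ finCycle s) ⁻¹' D).Nonempty :=
    hD.nonempty.preimage (finCycle s).injective.surjective_comp_right
  refine hruled.2 (isBlack_box_of_dependsOn hne (dependsOn_mem_preimage_comp hD.dependsOn _) ?_)
  rintro i ⟨p, hp, hpi⟩
  have hexists : ∃ p : Fin (m * δ), (p : ℕ) < m ∧ (finCycle s p : ℕ) < m :=
    ⟨p, by simpa using hp, by simp [hpi, brickIdx]⟩
  rw [exists_lt_finCycle_lt_iff i.pos (by lia)] at hexists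
  lia

end Rotation

/-- **rotations.** The rotation matrix `Λ_s` changes the type of every
subset `D ⊆ V` in standard form of non-trivial type if and only if
`m ≤ s ≤ m(δ - 1)`. -/
theorem stmt_11 (m δ : ℕ) (hm : 2 ≤ m) (hδ : 2 ≤ δ) (s : ℕ) (hs : s < m * δ) :
    (∀ (D : Set (Fin (m * δ) → ZMod 2)) (nw nr nb : ℕ),
        StdForm m δ D nw nr nb → nw ≠ δ → nb ≠ δ →
        ¬ SameType m δ D ((fun v => Matrix.vecMul v (rotMatrix (m * δ) s)) '' D)) ↔
      (m ≤ s ∧ s ≤ m * (δ - 1)) := by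
  have hmn : m ≤ m * δ := Nat.le_mul_of_pos_right m (by lia)
  have hmδ : m * (δ - 1) + m = m * δ := by rw [Nat.mul_sub_one, Nat.sub_add_cancel hmn]
  lift s to Fin (m * δ) using hs
  rw [rotMatrix_eq_permMatrix]
  simp only [image_vecMul_permMatrix]
  constructor
  · intro hchange
    by_contra hs
    obtain ⟨p, hp, hsp⟩ := (exists_lt_finCycle_lt_iff (by lia) hmn s).2 (by lia)
    exact hchange _ 0 1 (δ - 1) (stdForm_coordHyperplane hm hp) (by lia) (by lia)
      (sameType_preimage_comp_coordHyperplane hm hp hsp)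
  · rintro ⟨hms, hsm⟩ D nw nr nb hD hnw hnb
    have hsum := hD.1
    have hnr := hD.2.1
    rcases Nat.eq_zero_or_pos nw with rfl | hpos
    · obtain rfl : nr = 1 := by lia
      exact hD.not_sameType_finCycle_of_ruled hms (by lia)
    · exact hD.hasType.not_sameType_finCycle hD.nonempty hpos (by lia) hms (by lia)
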